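/- arXiv:2510.19961 — 2 statements merged into one kernel-verified Lean document; each statement's English description precedes it below -/
import Mathlib

section
/- Let (Q,·,e) be a loop with left and middle nuclear squares, let a ∈ Nuc_ℓ(Q) ∩ Nuc_m(Q) and x ∈ Q. Then L_x ∘ L_a ∘ L_x^{-1} = L_{(x·a)·x^r}, and (x·a)·x^r = x·(a·x^r) lies in Nuc_ℓ(Q) ∩ Nuc_m(Q). -/
/-- A loop `(Q, ·, e)`: a quasigroup with two-sided identity, presented with
explicit left division `ldiv a b = a \ b` and right division `rdiv b a = b / a`. -/
structure LoopStr (Q : Type*) where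
  mul : Q → Q → Q
  e : Q
  ldiv : Q → Q → Q
  rdiv : Q → Q → Q
  one_mul : ∀ x, mul e x = x
  mul_one : ∀ x, mul x e = x
  mul_ldiv : ∀ a b, mul a (ldiv a b) = b
  ldiv_mul : ∀ a b, ldiv a (mul a b) = b
  rdiv_mul : ∀ a b, mul (rdiv b a) a = b
  mul_rdiv : ∀ a b, rdiv (mul b a) a = b

namespace LoopStr

variable {Q : Type*} (S : LoopStr Q)

/-- The left inverse `x^ℓ = e / x`. -/
def linv (x : Q) : Q := S.rdiv S.e x

/-- The right inverse `x^r = x \ e`. -/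
def rinv (x : Q) : Q := S.ldiv x S.e

/-- The left nucleus. -/
def lnuc : Set Q := {a | ∀ x y, S.mul (S.mul a x) y = S.mul a (S.mul x y)}

/-- The middle nucleus. -/
def mnuc : Set Q := {a | ∀ x y, S.mul (S.mul x a) y = S.mul x (S.mul a y)}

/-- The right nucleus. -/
def rnuc : Set Q := {a | ∀ x y, S.mul (S.mul x y) a = S.mul x (S.mul y a)}

/-- The commutant `C(Q)`. -/
def commutant : Set Q := {a | ∀ x, S.mul a x = S.mul x a}

/-- The center `Z(Q) = C(Q) ∩ Nuc_ℓ ∩ Nuc_m ∩ Nuc_r`. -/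
def center : Set Q := S.commutant ∩ S.lnuc ∩ S.mnuc ∩ S.rnuc

/-- The left translation `L_a` as a map. -/
def leftMul (a : Q) : Q → Q := fun x => S.mul a x

/-- The left translation `L_a` as a permutation of `Q`. -/
def leftPerm (a : Q) : Equiv.Perm Q :=
  ⟨fun x => S.mul a x, fun x => S.ldiv a x, S.ldiv_mul a, S.mul_ldiv a⟩

/-- The right translation `R_a` as a permutation of `Q`. -/
def rightPerm (a : Q) : Equiv.Perm Q :=
  ⟨fun x => S.mul x a, fun x => S.rdiv x a, fun x => S.mul_rdiv a x, fun x => S.rdiv_mul a x⟩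

/-- The multiplication group `Mlt(Q) = ⟨L_x, R_x : x ∈ Q⟩ ≤ Sym(Q)`. -/
def Mlt : Subgroup (Equiv.Perm Q) :=
  Subgroup.closure (Set.range S.leftPerm ∪ Set.range S.rightPerm)

/-- `x^n = L_x^n(e)` for natural `n`. -/
def npow (a : Q) (n : ℕ) : Q := (S.leftPerm a ^ n) S.e

/-- `x^n = L_x^n(e)` for integer `n`. -/
def zpow (a : Q) (n : ℤ) : Q := (S.leftPerm a ^ n) S.e

/-- The order of an element: the least `n > 0` with `x^n = e` (or `0` if none exists). -/
noncomputable def lorder (a : Q) : ℕ := sInf {n : ℕ | 0 < n ∧ S.npow a n = S.e}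

/-- A subloop: contains `e`, closed under multiplication and both divisions. -/
def IsSubloop (N : Set Q) : Prop :=
  S.e ∈ N ∧ (∀ a ∈ N, ∀ b ∈ N, S.mul a b ∈ N) ∧
    (∀ a ∈ N, ∀ b ∈ N, S.ldiv a b ∈ N) ∧ (∀ a ∈ N, ∀ b ∈ N, S.rdiv a b ∈ N)

/-- A normal subloop: a subloop with `xN = Nx`, `(xN)y = x(Ny)`, `N(xy) = (Nx)y`
elementwise as sets. -/
def IsNormalSubloop (N : Set Q) : Prop :=
  S.IsSubloop N ∧
  (∀ x : Q, (fun a => S.mul x a) '' N = (fun a => S.mul a x) '' N) ∧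
  (∀ x y : Q, (fun a => S.mul (S.mul x a) y) '' N = (fun a => S.mul x (S.mul a y)) '' N) ∧
  (∀ x y : Q, (fun a => S.mul a (S.mul x y)) '' N = (fun a => S.mul (S.mul a x) y) '' N)

/-- A loop is simple if its only normal subloops are `{e}` and `Q`. -/
def IsSimple : Prop :=
  ∀ N : Set Q, S.IsNormalSubloop N → N = {S.e} ∨ N = Set.univ

lemma mul_rinv (x : Q) : S.mul x (S.rinv x) = S.e := S.mul_ldiv x S.e

lemma linv_mul (x : Q) : S.mul (S.linv x) x = S.e := S.rdiv_mul x S.e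

lemma linv_rinv (x : Q) : S.linv (S.rinv x) = x := by
  have h := S.mul_rdiv (S.rinv x) x
  rw [S.mul_rinv] at h
  exact h

lemma rinv_linv (x : Q) : S.rinv (S.linv x) = x := by
  have h := S.ldiv_mul (S.linv x) x
  rw [S.linv_mul] at h
  exact h

lemma rinv_e : S.rinv S.e = S.e := by
  have h := S.ldiv_mul S.e S.e
  rw [S.one_mul] at h
  exact h

lemma rdiv_e (x : Q) : S.rdiv x S.e = x := by
  have h := S.mul_rdiv S.e x
  rw [S.mul_one] at h
  exact h

/-- The principal right isostrophe `(Q, ∘)` of `(Q, ·)`, with `x ∘ y = x / (y^r)`,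
right division `x // y = x·(y^r)` and left division `x \\ y = (y \ x)^ℓ`. -/
def iso : LoopStr Q where
  mul x y := S.rdiv x (S.rinv y)
  e := S.e
  ldiv x y := S.linv (S.ldiv y x)
  rdiv x y := S.mul x (S.rinv y)
  one_mul x := S.linv_rinv x
  mul_one x := by
    show S.rdiv x (S.rinv S.e) = x
    rw [S.rinv_e, S.rdiv_e]
  mul_ldiv a b := by
    show S.rdiv a (S.rinv (S.linv (S.ldiv b a))) = b
    rw [S.rinv_linv]
    have h := S.mul_rdiv (S.ldiv b a) b
    rw [S.mul_ldiv] at h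
    exact h
  ldiv_mul a b := by
    show S.linv (S.ldiv (S.rdiv a (S.rinv b)) a) = b
    have h := S.ldiv_mul (S.rdiv a (S.rinv b)) (S.rinv b)
    rw [S.rdiv_mul] at h
    rw [h, S.linv_rinv]
  rdiv_mul a b := by
    show S.rdiv (S.mul b (S.rinv a)) (S.rinv a) = b
    exact S.mul_rdiv (S.rinv a) b
  mul_rdiv a b := by
    show S.mul (S.rdiv b (S.rinv a)) (S.rinv a) = b
    exact S.rdiv_mul (S.rinv a) b

end LoopStr

namespace LoopStr

variable {Q : Type*} (S : LoopStr Q)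

lemma mul_left_cancel {a b c : Q} (h : S.mul a b = S.mul a c) : b = c := by
  rw [← S.ldiv_mul a b, h, S.ldiv_mul]

lemma mul_mem_lnuc_inter_mnuc {a b : Q} (ha : a ∈ S.lnuc ∩ S.mnuc) (hb : b ∈ S.lnuc ∩ S.mnuc) :
    S.mul a b ∈ S.lnuc ∩ S.mnuc := by
  obtain ⟨hal, ham⟩ := ha
  obtain ⟨hbl, hbm⟩ := hb
  refine ⟨fun x y => ?_, fun x y => ?_⟩
  · rw [hal b x, hal, hbl, hal]
  · rw [← ham x b, hbm, ham, hal]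

lemma mul_rinv_cancel_left {a : Q} (ha : a ∈ S.lnuc) (x : Q) :
    S.mul a (S.mul (S.rinv a) x) = x := by
  rw [← ha, S.mul_rinv, S.one_mul]

lemma rinv_mul_cancel_left {a : Q} (ha : a ∈ S.lnuc) (x : Q) :
    S.mul (S.rinv a) (S.mul a x) = x :=
  S.mul_left_cancel (S.mul_rinv_cancel_left ha _)

lemma rinv_mem_lnuc_inter_mnuc {a : Q} (ha : a ∈ S.lnuc ∩ S.mnuc) :
    S.rinv a ∈ S.lnuc ∩ S.mnuc := by
  obtain ⟨hal, ham⟩ := ha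
  refine ⟨fun x y => S.mul_left_cancel (a := a) ?_, fun x y => ?_⟩
  · rw [← hal, S.mul_rinv_cancel_left hal, S.mul_rinv_cancel_left hal]
  · obtain ⟨z, rfl⟩ : ∃ z, S.mul z a = x := ⟨S.rdiv x a, S.rdiv_mul a x⟩
    rw [ham, S.mul_rinv, S.mul_one, ham, S.mul_rinv_cancel_left hal]

/-- If squares lie in `N = Nuc_ℓ ∩ Nuc_m`, then `(x·a)·x ∈ N` for all `a ∈ N`. -/
lemma mul_mul_self_mem (h : ∀ x : Q, S.mul x x ∈ S.lnuc ∩ S.mnuc)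
    {a : Q} (ha : a ∈ S.lnuc ∩ S.mnuc) (x : Q) :
    S.mul (S.mul x a) x ∈ S.lnuc ∩ S.mnuc := by
  have key := S.mul_mem_lnuc_inter_mnuc (S.rinv_mem_lnuc_inter_mnuc ha) (h (S.mul a x))
  rwa [ha.1 x, S.rinv_mul_cancel_left ha.1, ← ha.2 x] at key

/-- If `y·x` is left nuclear, then `y = (y·x)·x^ℓ`. -/
lemma mul_mul_linv {x y : Q} (hy : S.mul y x ∈ S.lnuc) :
    S.mul (S.mul y x) (S.linv x) = y := by
  rw [← S.mul_rdiv x (S.mul (S.mul y x) (S.linv x)), hy, S.linv_mul, S.mul_one, S.mul_rdiv]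

/-- If squares lie in `N = Nuc_ℓ ∩ Nuc_m`, then `xN ⊆ Nx`. -/
lemma exists_mul_eq_mul (h : ∀ x : Q, S.mul x x ∈ S.lnuc ∩ S.mnuc)
    {a : Q} (ha : a ∈ S.lnuc ∩ S.mnuc) (x : Q) :
    ∃ g ∈ S.lnuc ∩ S.mnuc, S.mul g x = S.mul x a := by
  have ht := S.mul_mul_self_mem h ha x
  have hs' := S.rinv_mem_lnuc_inter_mnuc (h x)
  refine ⟨_, S.mul_mem_lnuc_inter_mnuc ht hs', ?_⟩
  have hx : S.mul (S.rinv (S.mul x x)) x = S.linv x := by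
    apply S.mul_left_cancel (a := S.mul x x)
    rw [S.mul_rinv_cancel_left (h x).1, S.mul_mul_linv (h x).1]
  rw [ht.1, hx, S.mul_mul_linv ht.1]

end LoopStr

/-- In a loop with left and middle nuclear squares, for
`a ∈ Nuc_ℓ(Q) ∩ Nuc_m(Q)` and `x ∈ Q`, `L_x ∘ L_a ∘ L_x⁻¹ = L_{(x·a)·x^r}`, and
`(x·a)·x^r = x·(a·x^r)` lies in `Nuc_ℓ(Q) ∩ Nuc_m(Q)`.
(Here `L_x⁻¹` is the map `y ↦ x \ y`.) -/
theorem conj_leftMul {Q : Type*} (S : LoopStr Q)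
    (h : ∀ x : Q, S.mul x x ∈ S.lnuc ∩ S.mnuc)
    (a : Q) (ha : a ∈ S.lnuc ∩ S.mnuc) (x : Q) :
    S.leftMul x ∘ S.leftMul a ∘ S.ldiv x = S.leftMul (S.mul (S.mul x a) (S.rinv x)) ∧
    S.mul (S.mul x a) (S.rinv x) = S.mul x (S.mul a (S.rinv x)) ∧
    S.mul (S.mul x a) (S.rinv x) ∈ S.lnuc ∩ S.mnuc := by
  obtain ⟨g, hg, hgx⟩ := S.exists_mul_eq_mul h ha x
  have hconj : S.mul (S.mul x a) (S.rinv x) = g := by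
    rw [← hgx, hg.1, S.mul_rinv, S.mul_one]
  refine ⟨?_, ha.2 _ _, hconj ▸ hg⟩
  funext y
  change S.mul x (S.mul a (S.ldiv x y)) = S.mul (S.mul (S.mul x a) (S.rinv x)) y
  rw [hconj, ← ha.2, ← hgx, hg.1, S.mul_ldiv]
end

section
/- Let (Q,·,e) be a loop with left and middle nuclear squares and let N = Nuc_ℓ(Q) ∩ Nuc_m(Q). Then the set {L_a : a ∈ N} is a normal subgroup of the multiplication group Mlt(Q) = ⟨L_x, R_x : x ∈ Q⟩ (a subgroup of the symmetric group on Q), and N is a normal subloop of Q. -/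
namespace LoopStr

variable {Q : Type*} {S : LoopStr Q} {a b : Q}

lemma mul_left_cancel_s10 (S : LoopStr Q) (x : Q) {y z : Q} (h : S.mul x y = S.mul x z) : y = z :=
  (S.leftPerm x).injective h

lemma mul_right_cancel (S : LoopStr Q) (x : Q) {y z : Q} (h : S.mul y x = S.mul z x) : y = z :=
  (S.rightPerm x).injective h

lemma e_mem_lmnuc : S.e ∈ S.lnuc ∩ S.mnuc :=
  ⟨fun x y => by rw [S.one_mul, S.one_mul], fun x y => by rw [S.mul_one, S.one_mul]⟩

lemma mul_mem_lmnuc (ha : a ∈ S.lnuc ∩ S.mnuc) (hb : b ∈ S.lnuc ∩ S.mnuc) :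
    S.mul a b ∈ S.lnuc ∩ S.mnuc :=
  ⟨fun x y => by rw [ha.1, ha.1, hb.1, ha.1],
    fun x y => by rw [← ha.2, hb.2, ha.2, ha.1]⟩

lemma rinv_mul_of_mem_lnuc (ha : a ∈ S.lnuc) : S.mul (S.rinv a) a = S.e :=
  S.mul_left_cancel_s10 a (by rw [← ha, S.mul_rinv, S.one_mul, S.mul_one])

lemma mul_rinv_cancel_of_mem_lnuc (ha : a ∈ S.lnuc) (x : Q) :
    S.mul a (S.mul (S.rinv a) x) = x := by
  rw [← ha, S.mul_rinv, S.one_mul]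

lemma rinv_mem_lmnuc (ha : a ∈ S.lnuc ∩ S.mnuc) : S.rinv a ∈ S.lnuc ∩ S.mnuc := by
  refine ⟨fun x y => S.mul_left_cancel_s10 a ?_, fun x y => ?_⟩
  · rw [← ha.1, mul_rinv_cancel_of_mem_lnuc ha.1, mul_rinv_cancel_of_mem_lnuc ha.1]
  · rw [← S.rdiv_mul a x, ha.2, ha.2, S.mul_rinv, S.mul_one, mul_rinv_cancel_of_mem_lnuc ha.1]

lemma ldiv_eq_of_mem_lnuc (ha : a ∈ S.lnuc) (x : Q) : S.ldiv a x = S.mul (S.rinv a) x :=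
  S.mul_left_cancel_s10 a (by rw [S.mul_ldiv, mul_rinv_cancel_of_mem_lnuc ha])

lemma isSubloop_lmnuc : S.IsSubloop (S.lnuc ∩ S.mnuc) := by
  refine ⟨e_mem_lmnuc, fun a ha b hb => mul_mem_lmnuc ha hb, fun a ha b hb => ?_,
    fun a ha b hb => ?_⟩
  · rw [ldiv_eq_of_mem_lnuc ha.1]
    exact mul_mem_lmnuc (rinv_mem_lmnuc ha) hb
  · have hdiv : S.rdiv a b = S.mul a (S.rinv b) := S.mul_right_cancel b (by
      rw [S.rdiv_mul, ha.1, rinv_mul_of_mem_lnuc hb.1, S.mul_one])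
    rw [hdiv]
    exact mul_mem_lmnuc ha (rinv_mem_lmnuc hb)

lemma leftPerm_mul_of_mem_lnuc (ha : a ∈ S.lnuc) (x : Q) :
    S.leftPerm (S.mul a x) = S.leftPerm a * S.leftPerm x :=
  Equiv.ext (ha x)

lemma leftPerm_mul_of_mem_mnuc (ha : a ∈ S.mnuc) (x : Q) :
    S.leftPerm (S.mul x a) = S.leftPerm x * S.leftPerm a :=
  Equiv.ext (ha x)

lemma leftPerm_e : S.leftPerm S.e = 1 :=
  Equiv.ext S.one_mul

lemma leftPerm_rinv (ha : a ∈ S.lnuc) : S.leftPerm (S.rinv a) = (S.leftPerm a)⁻¹ :=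
  eq_inv_of_mul_eq_one_right (by rw [← leftPerm_mul_of_mem_lnuc ha, S.mul_rinv, leftPerm_e])

lemma commute_rightPerm_leftPerm (ha : a ∈ S.lnuc) (x : Q) :
    Commute (S.rightPerm x) (S.leftPerm a) :=
  Equiv.ext fun y => ha y x

lemma rinv_sq_mul_self (h : ∀ x : Q, S.mul x x ∈ S.lnuc ∩ S.mnuc)
    (x : Q) : S.mul (S.rinv (S.mul x x)) x = S.linv x :=
  S.mul_right_cancel x (by
    rw [(rinv_mem_lmnuc (h x)).1, rinv_mul_of_mem_lnuc (h x).1, S.linv_mul])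

lemma rinv_eq_sq_mul (h : ∀ x : Q, S.mul x x ∈ S.lnuc ∩ S.mnuc)
    (x : Q) : S.rinv x = S.mul (S.mul (S.rinv x) (S.rinv x)) x := by
  have hcancel := mul_rinv_cancel_of_mem_lnuc (h (S.rinv x)).1 (S.rinv x)
  rw [rinv_sq_mul_self h, S.linv_rinv] at hcancel
  exact hcancel.symm

/-- The nuclear squares `(a x)²` force `(x a) x` into `Nuc_ℓ ∩ Nuc_m`. -/
lemma mul_mul_self_mem_lmnuc (h : ∀ x : Q, S.mul x x ∈ S.lnuc ∩ S.mnuc)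
    (ha : a ∈ S.lnuc ∩ S.mnuc) (x : Q) :
    S.mul (S.mul x a) x ∈ S.lnuc ∩ S.mnuc := by
  have hsq := mul_mem_lmnuc (rinv_mem_lmnuc ha) (h (S.mul a x))
  rwa [ha.1, ← ldiv_eq_of_mem_lnuc ha.1, S.ldiv_mul, ← ha.2] at hsq

/-- The map `a ↦ (x a) x` is onto `Nuc_ℓ ∩ Nuc_m`. -/
lemma exists_mul_mul_self_eq (h : ∀ x : Q, S.mul x x ∈ S.lnuc ∩ S.mnuc)
    (hb : b ∈ S.lnuc ∩ S.mnuc) (x : Q) :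
    ∃ a ∈ S.lnuc ∩ S.mnuc, S.mul (S.mul x a) x = b := by
  have hc := rinv_mem_lmnuc hb
  set c := S.rinv b
  set r := S.rinv (S.mul c x) with hr
  have hrc : S.mul (S.mul (S.mul r r) c) x = r := by
    rw [(h r).1]
    exact (rinv_eq_sq_mul h (S.mul c x)).symm
  have ha := mul_mem_lmnuc (h r) hc
  refine ⟨_, ha, S.mul_left_cancel_s10 c ?_⟩
  rw [ha.2, hrc, ← hc.1, hr, S.mul_rinv, rinv_mul_of_mem_lnuc hb.1]

lemma exists_mul_eq_mul_left (h : ∀ x : Q, S.mul x x ∈ S.lnuc ∩ S.mnuc)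
    (ha : a ∈ S.lnuc ∩ S.mnuc) (x : Q) :
    ∃ b ∈ S.lnuc ∩ S.mnuc, S.mul b x = S.mul x a := by
  have hn := mul_mul_self_mem_lmnuc h ha x
  have hb := mul_mem_lmnuc hn (rinv_mem_lmnuc (h x))
  refine ⟨_, hb, S.mul_right_cancel x ?_⟩
  rw [hb.1, hn.1, rinv_mul_of_mem_lnuc (h x).1, S.mul_one]

lemma exists_mul_eq_mul_right (h : ∀ x : Q, S.mul x x ∈ S.lnuc ∩ S.mnuc)
    (hb : b ∈ S.lnuc ∩ S.mnuc) (x : Q) :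
    ∃ a ∈ S.lnuc ∩ S.mnuc, S.mul x a = S.mul b x := by
  obtain ⟨a, ha, hab⟩ := exists_mul_mul_self_eq h (mul_mem_lmnuc hb (h x)) x
  exact ⟨a, ha, S.mul_right_cancel x (by rw [hab, hb.1])⟩

lemma isNormalSubloop_lmnuc (h : ∀ x : Q, S.mul x x ∈ S.lnuc ∩ S.mnuc) :
    S.IsNormalSubloop (S.lnuc ∩ S.mnuc) := by
  refine ⟨isSubloop_lmnuc, fun x => Set.Subset.antisymm ?_ ?_,
    fun x y => Set.image_congr fun a ha => ha.2 x y,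
    fun x y => Set.image_congr fun a ha => (ha.1 x y).symm⟩
  · rintro _ ⟨a, ha, rfl⟩
    exact exists_mul_eq_mul_left h ha x
  · rintro _ ⟨a, ha, rfl⟩
    exact exists_mul_eq_mul_right h ha x

lemma conj_mem_leftPerm_image (h : ∀ x : Q, S.mul x x ∈ S.lnuc ∩ S.mnuc)
    {g : Equiv.Perm Q} (hg : g ∈ S.Mlt) :
    ∀ p ∈ S.leftPerm '' (S.lnuc ∩ S.mnuc), g * p * g⁻¹ ∈ S.leftPerm '' (S.lnuc ∩ S.mnuc) := by
  induction hg using Subgroup.closure_induction'' with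
  | mem g hg =>
    rintro _ ⟨a, ha, rfl⟩
    rcases hg with ⟨x, rfl⟩ | ⟨x, rfl⟩
    · obtain ⟨b, hb, hbx⟩ := exists_mul_eq_mul_left h ha x
      refine ⟨b, hb, eq_mul_inv_of_mul_eq ?_⟩
      rw [← leftPerm_mul_of_mem_lnuc hb.1, hbx, leftPerm_mul_of_mem_mnuc ha.2]
    · exact ⟨a, ha, (commute_rightPerm_leftPerm ha.1 x).mul_inv_cancel.symm⟩
  | inv_mem g hg =>
    rintro _ ⟨a, ha, rfl⟩
    rcases hg with ⟨x, rfl⟩ | ⟨x, rfl⟩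
    · obtain ⟨b, hb, hbx⟩ := exists_mul_eq_mul_right h ha x
      refine ⟨b, hb, ?_⟩
      rw [inv_inv, mul_assoc, eq_inv_mul_iff_mul_eq, ← leftPerm_mul_of_mem_mnuc hb.2, hbx,
        leftPerm_mul_of_mem_lnuc ha.1]
    · exact ⟨a, ha, (commute_rightPerm_leftPerm ha.1 x).inv_left.mul_inv_cancel.symm⟩
  | one => simp
  | mul g k _ _ hg hk =>
    intro p hp
    have hgk := hg _ (hk p hp)
    rwa [show g * (k * p * k⁻¹) * g⁻¹ = g * k * p * (g * k)⁻¹ by group] at hgk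

end LoopStr

/-- In a loop with left and middle nuclear squares, with
`N = Nuc_ℓ(Q) ∩ Nuc_m(Q)`, the set `{L_a : a ∈ N}` is a normal subgroup of
`Mlt(Q)` (it is contained in `Mlt(Q)`, contains the identity, is closed under
multiplication and inverses, and is invariant under conjugation by elements of
`Mlt(Q)`), and `N` is a normal subloop of `Q`. -/
theorem lmnuc_normal {Q : Type*} (S : LoopStr Q)
    (h : ∀ x : Q, S.mul x x ∈ S.lnuc ∩ S.mnuc) :
    (S.leftPerm '' (S.lnuc ∩ S.mnuc) ⊆ (S.Mlt : Set (Equiv.Perm Q))) ∧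
    (1 : Equiv.Perm Q) ∈ S.leftPerm '' (S.lnuc ∩ S.mnuc) ∧
    (∀ p ∈ S.leftPerm '' (S.lnuc ∩ S.mnuc), ∀ q ∈ S.leftPerm '' (S.lnuc ∩ S.mnuc),
      p * q ∈ S.leftPerm '' (S.lnuc ∩ S.mnuc)) ∧
    (∀ p ∈ S.leftPerm '' (S.lnuc ∩ S.mnuc), p⁻¹ ∈ S.leftPerm '' (S.lnuc ∩ S.mnuc)) ∧
    (∀ g ∈ S.Mlt, ∀ p ∈ S.leftPerm '' (S.lnuc ∩ S.mnuc),
      g * p * g⁻¹ ∈ S.leftPerm '' (S.lnuc ∩ S.mnuc)) ∧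
    S.IsNormalSubloop (S.lnuc ∩ S.mnuc) := by
  refine ⟨?_, ⟨S.e, LoopStr.e_mem_lmnuc, LoopStr.leftPerm_e⟩, ?_, ?_,
    fun g hg => LoopStr.conj_mem_leftPerm_image h hg, LoopStr.isNormalSubloop_lmnuc h⟩
  · rintro _ ⟨a, -, rfl⟩
    exact Subgroup.subset_closure (Or.inl ⟨a, rfl⟩)
  · rintro _ ⟨a, ha, rfl⟩ _ ⟨b, hb, rfl⟩
    exact ⟨_, LoopStr.mul_mem_lmnuc ha hb, LoopStr.leftPerm_mul_of_mem_lnuc ha.1 b⟩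
  · rintro _ ⟨a, ha, rfl⟩
    exact ⟨_, LoopStr.rinv_mem_lmnuc ha, LoopStr.leftPerm_rinv ha.1⟩
end
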